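/- Let f : ℝ² → ℝ be smooth, suppose that for every multi-index β one has ∂^β f(x) = o(|x|^{−5/2−|β|}) as |x| → ∞, and suppose ∫_{ℝ²} f dx = 0. Then the logarithmic potential u(x) = (1/2π) ∫_{ℝ²} log|x−y| f(y) dy is well-defined (the integral converges absolutely for each x), u is smooth, it satisfies Δu = f on ℝ², and u(x) = o(|x|^{−1/2}) as |x| → ∞. -/

import Mathlib

open Real Filter Asymptotics MeasureTheory

noncomputable section

/-- Partial derivative of a scalar function on ℝ² in the i-th coordinate direction. -/
def pd2 (i : Fin 2) (g : EuclideanSpace ℝ (Fin 2) → ℝ) (x : EuclideanSpace ℝ (Fin 2)) : ℝ :=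
  fderiv ℝ g x (EuclideanSpace.single i 1)

/-- The logarithmic potential u(x) = (1/2π) ∫_{ℝ²} log|x−y| f(y) dy. -/
def logPotential (f : EuclideanSpace ℝ (Fin 2) → ℝ) (x : EuclideanSpace ℝ (Fin 2)) : ℝ :=
  (2 * π)⁻¹ * ∫ y, Real.log ‖x - y‖ * f y

/-!
If `f` and its derivatives decay like `|x| ^ (-r)` with `r > 2`, Peetre's inequality
`(1 + |x - y|) ^ (-r) ≤ (1 + |x|) ^ r * (1 + |y|) ^ (-r)` bounds the integrand of `k ⋆ f` locally
uniformly in `x`, for every kernel `k` integrable against `(1 + |y|) ^ (-r)`. So `k ⋆ f` is smooth,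
with all derivatives falling on `f`, and `k = log |y|` is such a kernel.

For the equation, replace `log |y|` by `log (|y| ^ 2 + ε) / 2`. Two integrations by parts move the
Laplacian from `f` to this smooth kernel, where it equals `2 * ε / (|y| ^ 2 + ε) ^ 2`, which is
`2 * π` times an approximate identity; then let `ε → 0`.

For the decay, the vanishing mean of `f` allows `log |x - y|` to be replaced by
`log (|x - y| / |x|)`. This is `O(|y| / |x|)` for `|y| ≤ |x| / 2`, so a bounded set of `y`
contributes `O(|x|⁻¹)`. Outside a large ball `|f y| ≤ δ * |y| ^ (-r)`, and the substitution
`y = |x| w` turns the integral of `|log (|x - y| / |x|)| * |y| ^ (-r)` into an integral bounded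
independently of `x`, times `|x| ^ (2 - r)`; convergence at `w = 0` uses `r < 3`.
-/

open Module Metric ContinuousLinearMap
open scoped ContDiff Convolution Topology RealInnerProductSpace

section Weights

variable {E : Type*} [NormedAddCommGroup E]

lemma abs_log_le_rpow_add_rpow_neg_div {t ε : ℝ} (ht : 0 ≤ t) (hε : 0 < ε) :
    |log t| ≤ (t ^ ε + t ^ (-ε)) / ε := by
  have hpos : log t ≤ t ^ ε / ε := log_le_rpow_div ht hε
  have hneg : -log t ≤ t ^ (-ε) / ε := by
    simpa only [log_inv, inv_rpow ht, rpow_neg ht] using log_le_rpow_div (inv_nonneg.2 ht) hε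
  have : 0 ≤ t ^ ε / ε := by positivity
  have : 0 ≤ t ^ (-ε) / ε := by positivity
  rw [add_div]
  exact abs_le.2 ⟨by linarith, by linarith⟩

lemma one_add_norm_sub_rpow_neg_le {r : ℝ} (hr : 0 ≤ r) (x y : E) :
    (1 + ‖x - y‖) ^ (-r) ≤ (1 + ‖x‖) ^ r * (1 + ‖y‖) ^ (-r) := by
  have htri : 1 + ‖y‖ ≤ (1 + ‖x‖) * (1 + ‖x - y‖) := by
    have : ‖y‖ ≤ ‖x‖ + ‖x - y‖ := by simpa using norm_sub_le x (x - y)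
    nlinarith [mul_nonneg (norm_nonneg x) (norm_nonneg (x - y))]
  calc (1 + ‖x - y‖) ^ (-r)
      = (1 + ‖x‖) ^ r * ((1 + ‖x‖) * (1 + ‖x - y‖)) ^ (-r) := by
        rw [mul_rpow (by positivity) (by positivity), ← mul_assoc, ← rpow_add (by positivity),
          add_neg_cancel, rpow_zero, one_mul]
    _ ≤ (1 + ‖x‖) ^ r * (1 + ‖y‖) ^ (-r) := by
        gcongr ?_ * ?_
        exact rpow_le_rpow_of_nonpos (by positivity) htri (neg_nonpos.2 hr)

lemma continuous_one_add_norm_rpow (r : ℝ) : Continuous fun x : E ↦ (1 + ‖x‖) ^ r :=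
  (continuous_const.add continuous_norm).rpow_const fun x ↦
    .inl (by positivity : (1 : ℝ) + ‖x‖ ≠ 0)

variable [ProperSpace E]

lemma isTheta_one_add_norm_rpow_cocompact (r : ℝ) :
    (fun x : E ↦ (1 + ‖x‖) ^ r) =Θ[cocompact E] fun x ↦ ‖x‖ ^ r := by
  have hconst : (fun _ : E ↦ (1 : ℝ)) =o[cocompact E] fun x ↦ ‖x‖ :=
    (isLittleO_const_left_of_ne one_ne_zero).2
      (by simpa using tendsto_norm_cocompact_atTop)
  exact (hconst.add_isTheta (isTheta_refl _ _)).rpow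
    (.of_forall fun x ↦ by positivity) (.of_forall fun x ↦ norm_nonneg x)

lemma isBigO_norm_rpow_cocompact_of_le {a b : ℝ} (hab : a ≤ b) :
    (fun x : E ↦ ‖x‖ ^ a) =O[cocompact E] fun x ↦ ‖x‖ ^ b := by
  refine .of_norm_eventuallyLE ?_
  filter_upwards [tendsto_norm_cocompact_atTop.eventually_ge_atTop 1] with x hx
  rw [norm_of_nonneg (by positivity)]
  exact rpow_le_rpow_of_exponent_le hx hab

lemma isLittleO_norm_rpow_cocompact_of_lt {a b : ℝ} (hab : a < b) :
    (fun x : E ↦ ‖x‖ ^ a) =o[cocompact E] fun x ↦ ‖x‖ ^ b := by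
  have hsmall : Tendsto (fun x : E ↦ ‖x‖ ^ (-(b - a))) (cocompact E) (𝓝 0) :=
    (tendsto_rpow_neg_atTop (sub_pos.2 hab)).comp tendsto_norm_cocompact_atTop
  refine isLittleO_of_tendsto' ?_ (hsmall.congr' ?_) <;>
    filter_upwards [tendsto_norm_cocompact_atTop.eventually_gt_atTop 0] with x hx
  · exact fun h ↦ absurd h (by positivity)
  · rw [← rpow_sub hx, neg_sub]

variable {F : Type*} [NormedAddCommGroup F] {h : E → F} {r : ℝ}

lemma exists_norm_le_mul_norm_rpow_of_isLittleO {δ : ℝ} (ho : h =o[cocompact E] fun x ↦ ‖x‖ ^ r)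
    (hδ : 0 < δ) : ∃ M, 0 ≤ M ∧ ∀ x, M ≤ ‖x‖ → ‖h x‖ ≤ δ * ‖x‖ ^ r := by
  have hsmall := isLittleO_iff.1 ho hδ
  rw [← cobounded_eq_cocompact, ← comap_norm_atTop, eventually_comap] at hsmall
  obtain ⟨M, hM⟩ := eventually_atTop.1 hsmall
  refine ⟨max M 0, le_max_right M 0, fun x hx ↦ ?_⟩
  simpa only [norm_of_nonneg (rpow_nonneg (norm_nonneg x) _)] using
    hM ‖x‖ ((le_max_left M 0).trans hx) x rfl

lemma exists_norm_le_mul_one_add_norm_rpow (hc : Continuous h)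
    (hO : h =O[cocompact E] fun x ↦ ‖x‖ ^ r) :
    ∃ C, ∀ x, ‖h x‖ ≤ C * (1 + ‖x‖) ^ r := by
  obtain ⟨C, hC⟩ := (hO.trans (isTheta_one_add_norm_rpow_cocompact r).isBigO_symm).bound
  obtain ⟨K, hK, hKC⟩ := mem_cocompact.1 hC
  obtain ⟨D, hD⟩ := hK.exists_bound_of_continuousOn (f := fun x ↦ ‖h x‖ / (1 + ‖x‖) ^ r)
    (hc.norm.div (continuous_one_add_norm_rpow r) fun x ↦ by positivity).continuousOn
  refine ⟨max C D, fun x ↦ ?_⟩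
  have hpos : 0 < (1 + ‖x‖) ^ r := by positivity
  by_cases hx : x ∈ K
  · have hDx := hD x hx
    rw [norm_of_nonneg (by positivity), div_le_iff₀ hpos] at hDx
    exact hDx.trans (by gcongr; exact le_max_right C D)
  · have hCx : ‖h x‖ ≤ C * ‖(1 + ‖x‖) ^ r‖ := hKC hx
    rw [norm_of_nonneg hpos.le] at hCx
    exact hCx.trans (by gcongr; exact le_max_left C D)

end Weights

section WeightIntegrability

variable {E : Type*} [NormedAddCommGroup E] [NormedSpace ℝ E] [FiniteDimensional ℝ E]
  [Nontrivial E] [MeasurableSpace E] [BorelSpace E] {μ : Measure E} [μ.IsAddHaarMeasure]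

lemma integrable_norm_rpow_neg_mul_one_add_norm_rpow_neg {a b : ℝ} (ha : a < finrank ℝ E)
    (hb : 0 ≤ b) (hab : finrank ℝ E < a + b) :
    Integrable (fun y : E ↦ ‖y‖ ^ (-a) * (1 + ‖y‖) ^ (-b)) μ := by
  have hloc : LocallyIntegrable (fun y : E ↦ ‖y‖ ^ (-a) * (1 + ‖y‖) ^ (-b)) μ := by
    refine locallyIntegrable_of_norm_le_rpow finrank_pos (C := 1) ha (.of_forall fun y ↦ ?_)
      (by fun_prop)
    rw [norm_of_nonneg (by positivity), one_mul]
    exact mul_le_of_le_one_right (by positivity)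
      (rpow_le_one_of_one_le_of_nonpos (by linarith [norm_nonneg y]) (neg_nonpos.2 hb))
  have hinfty : (fun y : E ↦ ‖y‖ ^ (-a) * (1 + ‖y‖) ^ (-b)) =O[cocompact E]
      fun y ↦ (1 + ‖y‖) ^ (-(a + b)) := by
    refine ((isTheta_one_add_norm_rpow_cocompact (-a)).isBigO_symm.mul
      (isBigO_refl _ _)).congr_right fun y ↦ ?_
    rw [← rpow_add (by positivity), neg_add]
  exact hloc.integrable_of_isBigO_cocompact hinfty
    ((integrable_one_add_norm hab).integrableAtFilter _)

lemma integrable_log_norm_mul_one_add_norm_rpow_neg {r : ℝ} (hr : finrank ℝ E < r) :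
    Integrable (fun y : E ↦ log ‖y‖ * (1 + ‖y‖) ^ (-r)) μ := by
  have hd : (0 : ℝ) < finrank ℝ E := mod_cast finrank_pos
  obtain ⟨ε, hε, hεr⟩ := exists_between (lt_min (sub_pos.2 hr) hd)
  obtain ⟨hεr, hεd⟩ := lt_min_iff.1 hεr
  have hgrowth := integrable_norm_rpow_neg_mul_one_add_norm_rpow_neg (E := E) (μ := μ)
    (a := -ε) (b := r) (by linarith) (by linarith) (by linarith)
  have hpole := integrable_norm_rpow_neg_mul_one_add_norm_rpow_neg (E := E) (μ := μ)
    (a := ε) (b := r) (by linarith) (by linarith) (by linarith)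
  refine ((hgrowth.add hpole).div_const ε).mono' (by fun_prop) (.of_forall fun y ↦ ?_)
  rw [norm_mul, norm_of_nonneg (r := (1 + ‖y‖) ^ (-r)) (by positivity), Pi.add_apply, ← add_mul,
    mul_div_right_comm, neg_neg]
  gcongr
  exact abs_log_le_rpow_add_rpow_neg_div (norm_nonneg y) hε

end WeightIntegrability

/-- Smooth functions all of whose derivatives, of every order, decay like `(1 + ‖x‖) ^ (-r)`. This
is the class of densities that are convolved with the logarithm; unlike in the Schwartz space, one
exponent serves all orders. -/
structure SmoothDecay {E F : Type*} [NormedAddCommGroup E] [NormedSpace ℝ E] [NormedAddCommGroup F]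
    [NormedSpace ℝ F] (r : ℝ) (g : E → F) : Prop where
  contDiff : ContDiff ℝ ∞ g
  exists_bound (m : ℕ) : ∃ C, ∀ x, ‖iteratedFDeriv ℝ m g x‖ ≤ C * (1 + ‖x‖) ^ (-r)

namespace SmoothDecay

variable {E F : Type*} [NormedAddCommGroup E] [NormedSpace ℝ E]
  [NormedAddCommGroup F] [NormedSpace ℝ F] {r : ℝ} {g : E → F}

lemma of_isBigO [ProperSpace E] (hg : ContDiff ℝ ∞ g)
    (hO : ∀ m : ℕ, iteratedFDeriv ℝ m g =O[cocompact E] fun x ↦ ‖x‖ ^ (-r)) : SmoothDecay r g where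
  contDiff := hg
  exists_bound m := exists_norm_le_mul_one_add_norm_rpow
    (hg.continuous_iteratedFDeriv (mod_cast le_top)) (hO m)

lemma differentiable (hg : SmoothDecay r g) : Differentiable ℝ g :=
  hg.contDiff.differentiable (by simp)

lemma continuous (hg : SmoothDecay r g) : Continuous g :=
  hg.contDiff.continuous

lemma exists_norm_le (hg : SmoothDecay r g) : ∃ C, ∀ x, ‖g x‖ ≤ C * (1 + ‖x‖) ^ (-r) := by
  simpa using hg.exists_bound 0

protected lemma fderiv (hg : SmoothDecay r g) : SmoothDecay r (fderiv ℝ g) where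
  contDiff := hg.contDiff.fderiv_right (by simp)
  exists_bound m := by simpa only [norm_iteratedFDeriv_fderiv] using hg.exists_bound (m + 1)

lemma clm_comp {G : Type*} [NormedAddCommGroup G] [NormedSpace ℝ G] (hg : SmoothDecay r g)
    (L : F →L[ℝ] G) : SmoothDecay r fun x ↦ L (g x) where
  contDiff := L.contDiff.comp hg.contDiff
  exists_bound m := by
    obtain ⟨C, hC⟩ := hg.exists_bound m
    refine ⟨‖L‖ * C, fun x ↦ ?_⟩
    calc ‖iteratedFDeriv ℝ m (L ∘ g) x‖
        ≤ ‖L‖ * ‖iteratedFDeriv ℝ m g x‖ :=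
          L.norm_iteratedFDeriv_comp_left hg.contDiff.contDiffAt (mod_cast le_top)
      _ ≤ ‖L‖ * C * (1 + ‖x‖) ^ (-r) := by rw [mul_assoc]; gcongr; exact hC x

lemma fderiv_apply (hg : SmoothDecay r g) (v : E) : SmoothDecay r fun x ↦ fderiv ℝ g x v :=
  hg.fderiv.clm_comp (ContinuousLinearMap.apply ℝ F v)

lemma exists_norm_smul_sub_le {k : E → ℝ} (hr : 0 ≤ r) (hg : SmoothDecay r g) :
    ∃ C, 0 ≤ C ∧ ∀ x y, ‖k y • g (x - y)‖ ≤ C * (1 + ‖x‖) ^ r * ‖k y * (1 + ‖y‖) ^ (-r)‖ := by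
  obtain ⟨C, hC⟩ := hg.exists_norm_le
  have hC0 : 0 ≤ C := by simpa using (norm_nonneg _).trans (hC 0)
  refine ⟨C, hC0, fun x y ↦ ?_⟩
  calc ‖k y • g (x - y)‖
      = ‖k y‖ * ‖g (x - y)‖ := norm_smul _ _
    _ ≤ ‖k y‖ * (C * ((1 + ‖x‖) ^ r * (1 + ‖y‖) ^ (-r))) := by
      gcongr
      exact (hC _).trans (by gcongr; exact one_add_norm_sub_rpow_neg_le hr x y)
    _ = C * (1 + ‖x‖) ^ r * ‖k y * (1 + ‖y‖) ^ (-r)‖ := by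
      rw [norm_mul, norm_of_nonneg (r := (1 + ‖y‖) ^ (-r)) (by positivity)]
      ring

variable [MeasurableSpace E] [BorelSpace E] {μ : Measure E}

lemma integrable [FiniteDimensional ℝ E] [μ.IsAddHaarMeasure] (hr : finrank ℝ E < r)
    (hg : SmoothDecay r g) : Integrable g μ := by
  obtain ⟨C, hC⟩ := hg.exists_norm_le
  exact ((integrable_one_add_norm hr).const_mul C).mono' hg.continuous.aestronglyMeasurable
    (.of_forall hC)

variable [SecondCountableTopology E] {k : E → ℝ}

lemma aestronglyMeasurable_smul_sub (hk : Integrable (fun y ↦ k y * (1 + ‖y‖) ^ (-r)) μ)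
    (hg : SmoothDecay r g) (x : E) : AEStronglyMeasurable (fun y ↦ k y • g (x - y)) μ := by
  have hkm : AEStronglyMeasurable k μ := by
    refine (hk.aestronglyMeasurable.mul
      (continuous_one_add_norm_rpow r).aestronglyMeasurable).congr (.of_forall fun y ↦ ?_)
    change k y * (1 + ‖y‖) ^ (-r) * (1 + ‖y‖) ^ r = k y
    rw [mul_assoc, ← rpow_add (by positivity), neg_add_cancel, rpow_zero, mul_one]
  exact hkm.smul (hg.continuous.comp (continuous_sub_left x)).aestronglyMeasurable

lemma integrable_smul_sub (hr : 0 ≤ r) (hk : Integrable (fun y ↦ k y * (1 + ‖y‖) ^ (-r)) μ)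
    (hg : SmoothDecay r g) (x : E) : Integrable (fun y ↦ k y • g (x - y)) μ := by
  obtain ⟨C, -, hC⟩ := hg.exists_norm_smul_sub_le (k := k) hr
  exact (hk.norm.const_mul (C * (1 + ‖x‖) ^ r)).mono' (hg.aestronglyMeasurable_smul_sub hk x)
    (.of_forall (hC x))

lemma hasFDerivAt_convolution (hr : 0 ≤ r)
    (hk : Integrable (fun y ↦ k y * (1 + ‖y‖) ^ (-r)) μ) (hg : SmoothDecay r g) (x₀ : E) :
    HasFDerivAt (k ⋆[lsmul ℝ ℝ, μ] g) ((k ⋆[lsmul ℝ ℝ, μ] fderiv ℝ g) x₀) x₀ := by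
  obtain ⟨C, hC0, hC⟩ := hg.fderiv.exists_norm_smul_sub_le (k := k) hr
  refine hasFDerivAt_integral_of_dominated_of_fderiv_le (ball_mem_nhds x₀ one_pos)
    (F' := fun x y ↦ k y • fderiv ℝ g (x - y))
    (bound := fun y ↦ C * (1 + (‖x₀‖ + 1)) ^ r * ‖k y * (1 + ‖y‖) ^ (-r)‖)
    (.of_forall (hg.aestronglyMeasurable_smul_sub hk)) (hg.integrable_smul_sub hr hk x₀)
    (hg.fderiv.aestronglyMeasurable_smul_sub hk x₀) (.of_forall fun y x hx ↦ ?_)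
    (hk.norm.const_mul _) (.of_forall fun y x _ ↦ ?_)
  · have hx : ‖x‖ ≤ ‖x₀‖ + 1 := (norm_lt_of_mem_ball hx).le
    refine (hC x y).trans ?_
    gcongr
  · exact ((hasFDerivAt_comp_sub y).2 (hg.differentiable (x - y)).hasFDerivAt).const_smul (k y)

lemma fderiv_convolution_apply (hr : 0 ≤ r)
    (hk : Integrable (fun y ↦ k y * (1 + ‖y‖) ^ (-r)) μ) (hg : SmoothDecay r g) (v : E) :
    (fun x ↦ fderiv ℝ (k ⋆[lsmul ℝ ℝ, μ] g) x v) =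
      k ⋆[lsmul ℝ ℝ, μ] fun y ↦ fderiv ℝ g y v := by
  ext x
  rw [(hg.hasFDerivAt_convolution hr hk x).fderiv]
  exact integral_apply (hg.fderiv.integrable_smul_sub hr hk x) v

lemma contDiff_convolution [FiniteDimensional ℝ E] (hr : 0 ≤ r)
    (hk : Integrable (fun y ↦ k y * (1 + ‖y‖) ^ (-r)) μ) (hg : SmoothDecay r g) :
    ContDiff ℝ ∞ (k ⋆[lsmul ℝ ℝ, μ] g) := by
  refine contDiff_infty.2 fun n ↦ ?_
  induction n generalizing g with
  | zero => exact contDiff_zero.2 (continuous_iff_continuousAt.2 fun x ↦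
      (hg.hasFDerivAt_convolution hr hk x).continuousAt)
  | succ n ih =>
    rw [Nat.cast_succ, contDiff_succ_iff_fderiv_apply]
    refine ⟨fun x ↦
      (hg.hasFDerivAt_convolution hr hk x).differentiableAt, fun h ↦ absurd h (by simp), fun v ↦ ?_⟩
    rw [hg.fderiv_convolution_apply hr hk]
    exact ih (hg.fderiv_apply v)

end SmoothDecay

section IntegrationByParts

variable {E F : Type*} [NormedAddCommGroup E] [NormedSpace ℝ E] [FiniteDimensional ℝ E]
  [MeasurableSpace E] [BorelSpace E] [NormedAddCommGroup F] [NormedSpace ℝ F] {μ : Measure E}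
  [μ.IsAddHaarMeasure] {r : ℝ} {g : E → F}

lemma SmoothDecay.convolution_fderiv_apply {k : E → ℝ} (hr : 0 ≤ r) (hg : SmoothDecay r g) (v : E)
    (hkd : Differentiable ℝ k) (hk : Integrable (fun y ↦ k y * (1 + ‖y‖) ^ (-r)) μ)
    (hk' : Integrable (fun y ↦ fderiv ℝ k y v * (1 + ‖y‖) ^ (-r)) μ) :
    (k ⋆[lsmul ℝ ℝ, μ] fun y ↦ fderiv ℝ g y v) =
      (fun y ↦ fderiv ℝ k y v) ⋆[lsmul ℝ ℝ, μ] g := by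
  ext x
  have hderiv (y : E) : HasFDerivAt (fun y ↦ g (x - y)) (-fderiv ℝ g (x - y)) y :=
    ((hg.differentiable (x - y)).hasFDerivAt.comp y
      ((hasFDerivAt_id y).const_sub x)).congr_fderiv (by simp)
  have hfderiv (y : E) : fderiv ℝ (fun y ↦ g (x - y)) y v = -fderiv ℝ g (x - y) v := by
    rw [(hderiv y).fderiv, neg_apply]
  have hparts := integral_smul_fderiv_eq_neg_fderiv_smul_of_integrable (μ := μ) (f := k)
    (g := fun y ↦ g (x - y)) (v := v) (hg.integrable_smul_sub hr hk' x)
    (by simpa only [hfderiv, smul_neg] using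
      ((hg.fderiv_apply v).integrable_smul_sub hr hk x).fun_neg)
    (hg.integrable_smul_sub hr hk x) (fun y _ ↦ hkd y) fun y _ ↦ (hderiv y).differentiableAt
  simp only [hfderiv, smul_neg, integral_neg, neg_inj] at hparts
  exact hparts

end IntegrationByParts

section RegularizedLog

variable {E : Type*} [NormedAddCommGroup E]

/-- The smooth regularization `log √(‖y‖² + ε)` of `log ‖y‖`. -/
def regLog (ε : ℝ) (y : E) : ℝ := log (‖y‖ ^ 2 + ε) / 2

variable {ε : ℝ}

lemma abs_regLog_le (hε : 0 ≤ ε) (hε1 : ε ≤ 1) {y : E} (hy : y ≠ 0) :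
    |regLog ε y| ≤ |log ‖y‖| + 1 := by
  have hlower : 2 * log ‖y‖ ≤ log (‖y‖ ^ 2 + ε) := by
    simpa using log_le_log (by positivity) (by linarith : ‖y‖ ^ 2 ≤ ‖y‖ ^ 2 + ε)
  have hupper : log (‖y‖ ^ 2 + ε) ≤ 2 + 2 * |log ‖y‖| := by
    have hsplit := posLog_add (x := ‖y‖ ^ 2) (y := ε)
    rw [posLog_pow, (posLog_eq_zero_iff ε).2 (by rwa [abs_of_nonneg hε])] at hsplit
    have : log (‖y‖ ^ 2 + ε) ≤ posLog (‖y‖ ^ 2 + ε) := le_max_right _ _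
    have : posLog ‖y‖ ≤ |log ‖y‖| := max_le (abs_nonneg _) (le_abs_self _)
    have := log_two_lt_d9
    push_cast at hsplit
    linarith
  rw [regLog, abs_le]
  constructor <;> linarith [neg_abs_le (log ‖y‖)]

lemma tendsto_regLog {y : E} (hy : y ≠ 0) :
    Tendsto (fun ε ↦ regLog ε y) (𝓝[>] 0) (𝓝 (log ‖y‖)) := by
  have hcont : ContinuousAt (fun ε ↦ regLog ε y) 0 := by
    unfold regLog
    fun_prop (disch := simp [hy])
  simpa [regLog] using hcont.tendsto.mono_left nhdsWithin_le_nhds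

variable [InnerProductSpace ℝ E]

lemma hasFDerivAt_regLog (hε : 0 < ε) (y : E) :
    HasFDerivAt (regLog ε) ((‖y‖ ^ 2 + ε)⁻¹ • innerSL ℝ y) y := by
  unfold regLog
  simp only [div_eq_mul_inv]
  refine ((((hasStrictFDerivAt_norm_sq y).hasFDerivAt.add_const ε).log
    (by positivity)).mul_const (2⁻¹ : ℝ)).congr_fderiv ?_
  ext v
  simp only [smul_apply, smul_eq_mul, nsmul_eq_mul, Nat.cast_ofNat]
  ring

lemma continuous_regLog (hε : 0 < ε) : Continuous (regLog ε : E → ℝ) :=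
  continuous_iff_continuousAt.2 fun y ↦ (hasFDerivAt_regLog hε y).continuousAt

lemma fderiv_regLog_apply (hε : 0 < ε) (v : E) :
    (fun y ↦ fderiv ℝ (regLog ε) y v) = fun y ↦ ⟪y, v⟫ / (‖y‖ ^ 2 + ε) := by
  ext y
  simp [(hasFDerivAt_regLog hε y).fderiv, div_eq_inv_mul]

lemma hasFDerivAt_fderiv_regLog_apply (hε : 0 < ε) (v y : E) :
    HasFDerivAt (fun y ↦ fderiv ℝ (regLog ε) y v)
      ((‖y‖ ^ 2 + ε)⁻¹ • innerSL ℝ v - (2 * ⟪y, v⟫ / (‖y‖ ^ 2 + ε) ^ 2) • innerSL ℝ y) y := by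
  rw [fderiv_regLog_apply hε]
  have hnum : HasFDerivAt (fun y : E ↦ ⟪y, v⟫) (innerSL ℝ v) y :=
    (innerSL ℝ v).hasFDerivAt.congr_of_eventuallyEq (.of_forall fun y ↦ real_inner_comm v y)
  have hden : HasFDerivAt (fun y : E ↦ (‖y‖ ^ 2 + ε)⁻¹)
      (-((‖y‖ ^ 2 + ε) ^ 2)⁻¹ • 2 • innerSL ℝ y) y :=
    (hasDerivAt_inv (by positivity)).comp_hasFDerivAt y
      ((hasStrictFDerivAt_norm_sq y).hasFDerivAt.add_const ε)
  simp only [div_eq_mul_inv]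
  refine (hnum.mul hden).congr_fderiv ?_
  ext w
  simp only [add_apply, sub_apply, smul_apply, smul_eq_mul, nsmul_eq_mul, Nat.cast_ofNat]
  ring

lemma fderiv_fderiv_regLog_apply (hε : 0 < ε) (v y : E) :
    fderiv ℝ (fun y ↦ fderiv ℝ (regLog ε) y v) y v =
      ‖v‖ ^ 2 / (‖y‖ ^ 2 + ε) - 2 * ⟪y, v⟫ ^ 2 / (‖y‖ ^ 2 + ε) ^ 2 := by
  rw [(hasFDerivAt_fderiv_regLog_apply hε v y).fderiv]
  simp only [sub_apply, smul_apply, innerSL_apply_apply, smul_eq_mul, real_inner_self_eq_norm_sq]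
  ring

lemma sum_fderiv_fderiv_regLog_apply {ι : Type*} [Fintype ι] (b : OrthonormalBasis ι ℝ E)
    (hε : 0 < ε) (y : E) :
    ∑ i, fderiv ℝ (fun y ↦ fderiv ℝ (regLog ε) y (b i)) y (b i) =
      ((finrank ℝ E - 2) * ‖y‖ ^ 2 + finrank ℝ E * ε) / (‖y‖ ^ 2 + ε) ^ 2 := by
  have : ‖y‖ ^ 2 + ε ≠ 0 := by positivity
  simp only [fderiv_fderiv_regLog_apply hε, b.norm_eq_one, Finset.sum_sub_distrib, ← Finset.sum_div,
    ← Finset.mul_sum, b.sum_sq_inner_left, Finset.sum_const, Finset.card_univ,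
    finrank_eq_card_basis b.toBasis, nsmul_eq_mul]
  field_simp
  ring

lemma abs_fderiv_regLog_apply_le (hε : 0 < ε) (v y : E) :
    |fderiv ℝ (regLog ε) y v| ≤ ‖v‖ * (1 + ε⁻¹) := by
  have hle : ‖y‖ ≤ (1 + ε⁻¹) * (‖y‖ ^ 2 + ε) := by
    have : (1 + ε⁻¹) * (‖y‖ ^ 2 + ε) = ‖y‖ ^ 2 + 1 + (ε + ε⁻¹ * ‖y‖ ^ 2) := by field_simp; ring
    nlinarith [sq_nonneg (‖y‖ - 1), show 0 ≤ ε⁻¹ * ‖y‖ ^ 2 by positivity]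
  rw [congr_fun (fderiv_regLog_apply hε v) y, abs_div,
    abs_of_pos (a := ‖y‖ ^ 2 + ε) (by positivity), div_le_iff₀ (by positivity), mul_assoc]
  calc |⟪y, v⟫| ≤ ‖y‖ * ‖v‖ := abs_real_inner_le_norm y v
    _ ≤ ‖v‖ * ((1 + ε⁻¹) * (‖y‖ ^ 2 + ε)) := by rw [mul_comm]; gcongr

lemma abs_fderiv_fderiv_regLog_apply_le (hε : 0 < ε) (v y : E) :
    |fderiv ℝ (fun y ↦ fderiv ℝ (regLog ε) y v) y v| ≤ 2 * ‖v‖ ^ 2 / ε := by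
  have hfst : ‖v‖ ^ 2 / (‖y‖ ^ 2 + ε) ≤ ‖v‖ ^ 2 / ε := by
    gcongr
    linarith [sq_nonneg ‖y‖]
  have hsnd : ⟪y, v⟫ ^ 2 / (‖y‖ ^ 2 + ε) ^ 2 ≤ ‖v‖ ^ 2 / (‖y‖ ^ 2 + ε) := by
    rw [div_le_div_iff₀ (by positivity) (by positivity)]
    have hcs : ⟪y, v⟫ ^ 2 ≤ ‖y‖ ^ 2 * ‖v‖ ^ 2 := by
      rw [← sq_abs, ← mul_pow]
      gcongr
      exact abs_real_inner_le_norm y v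
    calc ⟪y, v⟫ ^ 2 * (‖y‖ ^ 2 + ε)
        ≤ (‖y‖ ^ 2 * ‖v‖ ^ 2) * (‖y‖ ^ 2 + ε) := by gcongr
      _ ≤ ((‖y‖ ^ 2 + ε) * ‖v‖ ^ 2) * (‖y‖ ^ 2 + ε) := by gcongr; linarith
      _ = ‖v‖ ^ 2 * (‖y‖ ^ 2 + ε) ^ 2 := by ring
  have : 0 ≤ ⟪y, v⟫ ^ 2 / (‖y‖ ^ 2 + ε) ^ 2 := by positivity
  have : 0 ≤ ‖v‖ ^ 2 / (‖y‖ ^ 2 + ε) := by positivity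
  rw [fderiv_fderiv_regLog_apply hε, mul_div_assoc, mul_div_assoc, abs_le]
  constructor <;> linarith

end RegularizedLog

section RegularizedConvolution

variable {E F : Type*} [NormedAddCommGroup E] [InnerProductSpace ℝ E] [FiniteDimensional ℝ E]
  [MeasurableSpace E] [BorelSpace E] [NormedAddCommGroup F] [NormedSpace ℝ F]
  {μ : Measure E} [μ.IsAddHaarMeasure] {r ε : ℝ} {g : E → F}

lemma integrable_fderiv_regLog_apply_mul_one_add_norm_rpow_neg (hr : finrank ℝ E < r) (hε : 0 < ε)
    (v : E) : Integrable (fun y ↦ fderiv ℝ (regLog ε) y v * (1 + ‖y‖) ^ (-r)) μ := by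
  have hcont : Continuous fun y ↦ fderiv ℝ (regLog ε) y v :=
    continuous_iff_continuousAt.2 fun y ↦ (hasFDerivAt_fderiv_regLog_apply hε v y).continuousAt
  exact (integrable_one_add_norm hr).bdd_mul hcont.aestronglyMeasurable
    (.of_forall (abs_fderiv_regLog_apply_le hε v))

lemma integrable_fderiv_fderiv_regLog_apply_mul_one_add_norm_rpow_neg (hr : finrank ℝ E < r)
    (hε : 0 < ε) (v : E) :
    Integrable (fun y ↦ fderiv ℝ (fun y ↦ fderiv ℝ (regLog ε) y v) y v * (1 + ‖y‖) ^ (-r)) μ :=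
  (integrable_one_add_norm hr).bdd_mul (measurable_fderiv_apply_const ℝ _ v).aestronglyMeasurable
    (.of_forall (abs_fderiv_fderiv_regLog_apply_le hε v))

variable [Nontrivial E]

lemma integrable_regLog_mul_one_add_norm_rpow_neg (hr : finrank ℝ E < r) (hε : 0 < ε)
    (hε1 : ε ≤ 1) : Integrable (fun y : E ↦ regLog ε y * (1 + ‖y‖) ^ (-r)) μ := by
  refine ((integrable_log_norm_mul_one_add_norm_rpow_neg hr).norm.add
    (integrable_one_add_norm hr)).mono' ((continuous_regLog hε).mul
      (continuous_one_add_norm_rpow _)).aestronglyMeasurable ?_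
  filter_upwards [Measure.ae_ne μ 0] with y hy
  have hw : 0 ≤ (1 + ‖y‖) ^ (-r) := by positivity
  rw [Pi.add_apply, norm_mul, norm_mul, norm_of_nonneg hw, ← add_one_mul]
  exact mul_le_mul_of_nonneg_right (abs_regLog_le hε.le hε1 hy) hw

lemma tendsto_convolution_regLog (hr : finrank ℝ E < r) (hg : SmoothDecay r g) (x : E) :
    Tendsto (fun ε ↦ (regLog ε ⋆[lsmul ℝ ℝ, μ] g) x) (𝓝[>] 0)
      (𝓝 (((fun y ↦ log ‖y‖) ⋆[lsmul ℝ ℝ, μ] g) x)) := by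
  have hr0 : 0 ≤ r := (Nat.cast_nonneg _).trans hr.le
  have hlog := hg.integrable_smul_sub hr0 (integrable_log_norm_mul_one_add_norm_rpow_neg hr) x
    (μ := μ)
  have hone := hg.integrable_smul_sub hr0 (k := fun _ ↦ 1) (μ := μ)
    (by simpa using integrable_one_add_norm hr) x
  refine tendsto_integral_filter_of_dominated_convergence
    (fun y ↦ ‖log ‖y‖ • g (x - y)‖ + ‖(1 : ℝ) • g (x - y)‖) ?_ ?_ (hlog.norm.add hone.norm) ?_
  · filter_upwards [self_mem_nhdsWithin] with ε hε
    exact ((continuous_regLog hε).smul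
      (hg.continuous.comp (continuous_sub_left x))).aestronglyMeasurable
  · filter_upwards [Ioc_mem_nhdsGT one_pos] with ε hε
    filter_upwards [Measure.ae_ne μ 0] with y hy
    rw [lsmul_apply, norm_smul, norm_smul, norm_smul, norm_one, ← add_mul]
    gcongr
    exact abs_regLog_le hε.1.le hε.2 hy
  · filter_upwards [Measure.ae_ne μ 0] with y hy
    exact (tendsto_regLog hy).smul_const _

lemma convolution_regLog_fderiv_fderiv_apply (hr : finrank ℝ E < r) (hg : SmoothDecay r g)
    (hε : 0 < ε) (hε1 : ε ≤ 1) (v : E) :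
    (regLog ε ⋆[lsmul ℝ ℝ, μ] fun y ↦ fderiv ℝ (fun y ↦ fderiv ℝ g y v) y v) =
      (fun y ↦ fderiv ℝ (fun y ↦ fderiv ℝ (regLog ε) y v) y v) ⋆[lsmul ℝ ℝ, μ] g := by
  have hr0 : 0 ≤ r := (Nat.cast_nonneg _).trans hr.le
  have hint' := integrable_fderiv_regLog_apply_mul_one_add_norm_rpow_neg (μ := μ) hr hε v
  rw [(hg.fderiv_apply v).convolution_fderiv_apply hr0 v
      (fun y ↦ (hasFDerivAt_regLog hε y).differentiableAt)
      (integrable_regLog_mul_one_add_norm_rpow_neg hr hε hε1) hint',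
    hg.convolution_fderiv_apply hr0 v
      (fun y ↦ (hasFDerivAt_fderiv_regLog_apply hε v y).differentiableAt) hint'
      (integrable_fderiv_fderiv_regLog_apply_mul_one_add_norm_rpow_neg hr hε v)]

lemma sum_convolution_regLog_fderiv_fderiv_apply {ι : Type*} [Fintype ι]
    (b : OrthonormalBasis ι ℝ E) (hr : finrank ℝ E < r) (hg : SmoothDecay r g) (hε : 0 < ε)
    (hε1 : ε ≤ 1) (x : E) :
    ∑ i, (regLog ε ⋆[lsmul ℝ ℝ, μ] fun y ↦ fderiv ℝ (fun y ↦ fderiv ℝ g y (b i)) y (b i)) x =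
      ((fun y ↦ ((finrank ℝ E - 2) * ‖y‖ ^ 2 + finrank ℝ E * ε) / (‖y‖ ^ 2 + ε) ^ 2)
        ⋆[lsmul ℝ ℝ, μ] g) x := by
  have hr0 : 0 ≤ r := (Nat.cast_nonneg _).trans hr.le
  simp only [congr_fun (convolution_regLog_fderiv_fderiv_apply hr hg hε hε1 _) x]
  simp only [convolution_def, lsmul_apply]
  rw [← integral_finsetSum _ fun i _ ↦ hg.integrable_smul_sub hr0
    (integrable_fderiv_fderiv_regLog_apply_mul_one_add_norm_rpow_neg hr hε (b i)) x]
  simp only [← Finset.sum_smul, sum_fderiv_fderiv_regLog_apply b hε]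

end RegularizedConvolution

section Plane

lemma integral_Ioi_mul_inv_one_add_sq_sq :
    ∫ t in Set.Ioi (0 : ℝ), t * ((1 + t ^ 2) ^ 2)⁻¹ = 1 / 2 := by
  have hderiv (t : ℝ) : HasDerivAt (fun t ↦ -(1 + t ^ 2)⁻¹ / 2) (t * ((1 + t ^ 2) ^ 2)⁻¹) t := by
    have hsq : HasDerivAt (fun t : ℝ ↦ 1 + t ^ 2) (2 * t) t := by
      simpa using (hasDerivAt_pow 2 t).const_add 1
    have : 1 + t ^ 2 ≠ 0 := by positivity
    exact ((hsq.inv this).neg.div_const 2).congr_deriv (by field)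
  have hlim : Tendsto (fun t : ℝ ↦ -(1 + t ^ 2)⁻¹ / 2) atTop (𝓝 0) := by
    have : Tendsto (fun t : ℝ ↦ 1 + t ^ 2) atTop atTop :=
      tendsto_atTop_add_const_left _ _ (tendsto_pow_atTop two_ne_zero)
    simpa using this.inv_tendsto_atTop.neg.div_const 2
  rw [integral_Ioi_of_hasDerivAt_of_nonneg' (fun t _ ↦ hderiv t)
    (fun t ht ↦ mul_nonneg (Set.mem_Ioi.1 ht).le (by positivity)) hlim]
  norm_num

lemma tendsto_norm_sq_mul_inv_one_add_norm_sq_sq {E : Type*} [NormedAddCommGroup E] :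
    Tendsto (fun y : E ↦ ‖y‖ ^ 2 * ((1 + ‖y‖ ^ 2) ^ 2)⁻¹) (Bornology.cobounded E) (𝓝 0) := by
  have hlim : Tendsto (fun y : E ↦ (1 + ‖y‖ ^ 2)⁻¹) (Bornology.cobounded E) (𝓝 0) :=
    (tendsto_atTop_add_const_left _ _ ((tendsto_pow_atTop two_ne_zero).comp
      tendsto_norm_cobounded_atTop)).inv_tendsto_atTop
  refine squeeze_zero (fun y ↦ by positivity) (fun y ↦ ?_) hlim
  rw [← div_eq_mul_inv, inv_eq_one_div, div_le_div_iff₀ (by positivity) (by positivity)]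
  nlinarith [sq_nonneg ‖y‖]

variable {E F : Type*} [NormedAddCommGroup E] [InnerProductSpace ℝ E] [FiniteDimensional ℝ E]
  [MeasurableSpace E] [BorelSpace E] [NormedAddCommGroup F] [NormedSpace ℝ F] [CompleteSpace F]
  {r : ℝ} {g : E → F}

lemma integral_inv_one_add_norm_sq_sq (hE : finrank ℝ E = 2) :
    ∫ y : E, ((1 + ‖y‖ ^ 2) ^ 2)⁻¹ = π := by
  have : Nontrivial E := nontrivial_of_finrank_eq_succ hE
  have hball : volume.real (ball (0 : E) 1) = π := by
    rw [measureReal_def, InnerProductSpace.volume_ball_of_dim_even (k := 1) hE]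
    simp [pi_nonneg]
  rw [integral_fun_norm_addHaar volume fun t ↦ ((1 + t ^ 2) ^ 2)⁻¹, hE, hball]
  simp only [Nat.add_one_sub_one, pow_one, smul_eq_mul, nsmul_eq_mul,
    integral_Ioi_mul_inv_one_add_sq_sq]
  ring

lemma tendsto_convolution_div_norm_sq_add_sq (hE : finrank ℝ E = 2) (hgi : Integrable g)
    (hgc : Continuous g) (x : E) :
    Tendsto (fun ε ↦ ((fun y ↦ 2 * ε / (‖y‖ ^ 2 + ε) ^ 2) ⋆[lsmul ℝ ℝ] g) x) (𝓝[>] 0)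
      (𝓝 ((2 * π) • g x)) := by
  have hdil : Tendsto (fun ε : ℝ ↦ (√ε)⁻¹) (𝓝[>] 0) atTop := by
    refine tendsto_inv_nhdsGT_zero.comp (tendsto_nhdsWithin_iff.2 ⟨?_, ?_⟩)
    · simpa using (continuous_sqrt.tendsto 0).mono_left nhdsWithin_le_nhds
    · filter_upwards [self_mem_nhdsWithin] with ε hε using sqrt_pos.2 hε
  have happrox := tendsto_integral_comp_smul_smul_of_integrable' (μ := (volume : Measure E))
    (φ := fun y ↦ π⁻¹ * ((1 + ‖y‖ ^ 2) ^ 2)⁻¹) (fun y ↦ by positivity)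
    (by rw [integral_const_mul, integral_inv_one_add_norm_sq_sq hE, inv_mul_cancel₀ pi_ne_zero])
    (by simpa [hE, mul_left_comm] using tendsto_norm_sq_mul_inv_one_add_norm_sq_sq.const_mul π⁻¹)
    hgi (hgc.continuousAt (x := x))
  refine ((happrox.comp hdil).const_smul (2 * π)).congr' ?_
  filter_upwards [self_mem_nhdsWithin] with ε (hε : 0 < ε)
  rw [Function.comp_apply, ← integral_smul, ← integral_sub_left_eq_self _ volume x, convolution_def]
  refine integral_congr_ae (.of_forall fun y ↦ ?_)
  simp only [lsmul_apply, smul_smul, sub_sub_cancel, hE, norm_smul, norm_inv, mul_pow, inv_pow,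
    sq_sqrt hε.le, norm_of_nonneg (sqrt_nonneg ε)]
  congr 1
  field

lemma SmoothDecay.sum_fderiv_fderiv_log_convolution {ι : Type*} [Fintype ι]
    (b : OrthonormalBasis ι ℝ E) (hE : finrank ℝ E = 2) (hr : 2 < r) (hg : SmoothDecay r g)
    (x : E) :
    ∑ i, fderiv ℝ (fun y ↦ fderiv ℝ ((fun y ↦ log ‖y‖) ⋆[lsmul ℝ ℝ] g) y (b i)) x (b i) =
      (2 * π) • g x := by
  have : Nontrivial E := nontrivial_of_finrank_eq_succ hE
  have hr0 : 0 ≤ r := by linarith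
  have hd : (finrank ℝ E : ℝ) < r := by rw [hE]; exact hr
  have hlog := integrable_log_norm_mul_one_add_norm_rpow_neg (μ := (volume : Measure E)) hd
  have hderiv (i : ι) :
      (fun y ↦ fderiv ℝ (fun y ↦ fderiv ℝ ((fun y ↦ log ‖y‖) ⋆[lsmul ℝ ℝ] g) y (b i)) y (b i)) =
        (fun y ↦ log ‖y‖) ⋆[lsmul ℝ ℝ] fun y ↦ fderiv ℝ (fun y ↦ fderiv ℝ g y (b i)) y (b i) := by
    rw [hg.fderiv_convolution_apply hr0 hlog, (hg.fderiv_apply _).fderiv_convolution_apply hr0 hlog]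
  have hreg := tendsto_finsetSum Finset.univ fun i _ ↦ tendsto_convolution_regLog
    (μ := volume) hd ((hg.fderiv_apply (b i)).fderiv_apply (b i)) x
  simp only [fun i ↦ congr_fun (hderiv i) x]
  refine tendsto_nhds_unique (hreg.congr' ?_)
    (tendsto_convolution_div_norm_sq_add_sq hE (hg.integrable hd) hg.continuous x)
  filter_upwards [Ioc_mem_nhdsGT one_pos] with ε hε
  rw [sum_convolution_regLog_fderiv_fderiv_apply b hd hg hε.1 hε.2, hE]
  simp

end Plane

section Decay

lemma abs_log_le_two_mul_abs_sub_one {t : ℝ} (ht : 1 / 2 ≤ t) : |log t| ≤ 2 * |t - 1| := by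
  have ht0 : 0 < t := by linarith
  have hupper : log t ≤ |t - 1| := (log_le_sub_one_of_pos ht0).trans (le_abs_self _)
  have hlower : -(2 * |t - 1|) ≤ log t := by
    refine le_trans ?_ (one_sub_inv_le_log_of_pos ht0)
    have hinv : 1 - t⁻¹ = (t - 1) / t := by field
    rw [hinv, le_div_iff₀ ht0]
    nlinarith [neg_abs_le (t - 1), abs_nonneg (t - 1)]
  exact abs_le.2 ⟨hlower, by linarith [abs_nonneg (t - 1)]⟩

variable {E F : Type*} [NormedAddCommGroup E]

lemma abs_log_norm_sub_div_norm_le {x y : E} (hx : x ≠ 0) (hxy : 2 * ‖y‖ ≤ ‖x‖) :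
    |log (‖x - y‖ / ‖x‖)| ≤ 2 * (‖y‖ / ‖x‖) := by
  have hx0 : 0 < ‖x‖ := norm_pos_iff.2 hx
  have hdist : |‖x - y‖ / ‖x‖ - 1| ≤ ‖y‖ / ‖x‖ := by
    rw [div_sub_one hx0.ne', abs_div, abs_norm]
    gcongr
    simpa using abs_norm_sub_norm_le (x - y) x
  have hhalf : ‖y‖ / ‖x‖ ≤ 1 / 2 := by rw [div_le_div_iff₀ hx0 two_pos]; linarith
  refine (abs_log_le_two_mul_abs_sub_one ?_).trans (by gcongr)
  linarith [(abs_le.1 hdist).1]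

lemma abs_log_norm_sub_mul_norm_rpow_neg_le {r : ℝ} (hr : 0 ≤ r) {e : E} (he : ‖e‖ = 1) (w : E) :
    |log ‖e - w‖| * ‖w‖ ^ (-r) ≤ 8 * (‖w‖ ^ (-(r - 1)) * (1 + ‖w‖) ^ (-2 : ℝ)) +
      5 ^ r * |log ‖e - w‖ * (1 + ‖e - w‖) ^ (-r)| := by
  rcases le_or_gt (2 * ‖w‖) 1 with hw | hw
  · refine le_add_of_le_of_nonneg ?_ (by positivity)
    rcases eq_or_ne w 0 with rfl | hw0
    · simp only [sub_zero, he, log_one, abs_zero, zero_mul]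
      positivity
    have hlog : |log ‖e - w‖| ≤ 2 * ‖w‖ := by
      have hne : e ≠ 0 := norm_ne_zero_iff.1 (he ▸ one_ne_zero)
      have := abs_log_norm_sub_div_norm_le hne (hw.trans_eq he.symm)
      rwa [he, div_one, div_one] at this
    have hweight : 1 ≤ 4 * (1 + ‖w‖) ^ (-2 : ℝ) := by
      rw [rpow_neg (by positivity), rpow_two, ← div_eq_mul_inv, one_le_div (by positivity)]
      nlinarith [norm_nonneg w]
    calc |log ‖e - w‖| * ‖w‖ ^ (-r)
        ≤ 2 * ‖w‖ * ‖w‖ ^ (-r) * 1 := by rw [mul_one]; gcongr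
      _ ≤ 2 * ‖w‖ * ‖w‖ ^ (-r) * (4 * (1 + ‖w‖) ^ (-2 : ℝ)) := by gcongr
      _ = 8 * (‖w‖ ^ (-(r - 1)) * (1 + ‖w‖) ^ (-2 : ℝ)) := by
        rw [neg_sub, sub_eq_add_neg, rpow_add (norm_pos_iff.2 hw0), rpow_one]
        ring
  · refine le_add_of_nonneg_of_le (by positivity) ?_
    have hfar : (1 + ‖e - w‖) / 5 ≤ ‖w‖ := by linarith [norm_sub_le e w]
    have hweight : ‖w‖ ^ (-r) ≤ 5 ^ r * (1 + ‖e - w‖) ^ (-r) :=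
      calc ‖w‖ ^ (-r)
          ≤ ((1 + ‖e - w‖) / 5) ^ (-r) :=
            rpow_le_rpow_of_nonpos (by positivity) hfar (neg_nonpos.2 hr)
        _ = 5 ^ r * (1 + ‖e - w‖) ^ (-r) := by
            rw [div_rpow (by positivity) (by positivity), rpow_neg (by norm_num : (0 : ℝ) ≤ 5),
              div_inv_eq_mul, mul_comm]
    rw [abs_mul, abs_of_nonneg (a := (1 + ‖e - w‖) ^ (-r)) (by positivity), mul_left_comm]
    gcongr

variable [NormedAddCommGroup F] [NormedSpace ℝ F] [MeasurableSpace E] {μ : Measure E} {r : ℝ}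
  {f : E → F}

lemma norm_integral_log_norm_sub_div_norm_smul_le {M δ : ℝ} {x : E} (hx : x ≠ 0)
    (hM0 : 0 ≤ M) (hδ : 0 ≤ δ) (hMx : 2 * M ≤ ‖x‖) (hf : Integrable f μ)
    (hM : ∀ y, M ≤ ‖y‖ → ‖f y‖ ≤ δ * ‖y‖ ^ (-r))
    (hint : Integrable (fun y ↦ |log (‖x - y‖ / ‖x‖)| * ‖y‖ ^ (-r)) μ) :
    ‖∫ y, log (‖x - y‖ / ‖x‖) • f y ∂μ‖ ≤ 2 * M * (∫ y, ‖f y‖ ∂μ) * ‖x‖⁻¹ +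
      δ * ∫ y, |log (‖x - y‖ / ‖x‖)| * ‖y‖ ^ (-r) ∂μ := by
  have hpointwise (y : E) : ‖log (‖x - y‖ / ‖x‖) • f y‖ ≤
      2 * M * ‖x‖⁻¹ * ‖f y‖ + δ * (|log (‖x - y‖ / ‖x‖)| * ‖y‖ ^ (-r)) := by
    rw [norm_smul, norm_eq_abs]
    rcases le_total ‖y‖ M with hy | hy
    · refine le_add_of_le_of_nonneg ?_ (by positivity)
      gcongr
      calc |log (‖x - y‖ / ‖x‖)|
          ≤ 2 * (‖y‖ / ‖x‖) := abs_log_norm_sub_div_norm_le hx (by linarith)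
        _ ≤ 2 * (M / ‖x‖) := by gcongr
        _ = 2 * M * ‖x‖⁻¹ := by ring
    · refine le_add_of_nonneg_of_le (by positivity) ?_
      rw [mul_left_comm]
      gcongr
      exact hM y hy
  refine (norm_integral_le_of_norm_le ((hf.norm.const_mul _).add (hint.const_mul δ))
    (.of_forall hpointwise)).trans_eq ?_
  simp only [Pi.add_apply]
  rw [integral_add (hf.norm.const_mul _) (hint.const_mul δ), integral_const_mul, integral_const_mul]
  ring

variable [NormedSpace ℝ E] [FiniteDimensional ℝ E] [Nontrivial E] [BorelSpace E]
  [μ.IsAddHaarMeasure]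

lemma exists_integral_abs_log_norm_sub_mul_norm_rpow_neg_le (hr : finrank ℝ E < r)
    (hr' : r < finrank ℝ E + 1) :
    ∃ C, ∀ e : E, ‖e‖ = 1 → Integrable (fun w ↦ |log ‖e - w‖| * ‖w‖ ^ (-r)) μ ∧
      ∫ w, |log ‖e - w‖| * ‖w‖ ^ (-r) ∂μ ≤ C := by
  have hr0 : 0 ≤ r := (Nat.cast_nonneg _).trans hr.le
  have hnear := integrable_norm_rpow_neg_mul_one_add_norm_rpow_neg (E := E) (μ := μ) (a := r - 1)
    (b := 2) (by linarith) two_pos.le (by linarith)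
  have hfar := (integrable_log_norm_mul_one_add_norm_rpow_neg (μ := μ) hr).abs
  refine ⟨8 * ∫ w, ‖w‖ ^ (-(r - 1)) * (1 + ‖w‖) ^ (-2 : ℝ) ∂μ +
    5 ^ r * ∫ w, |log ‖w‖ * (1 + ‖w‖) ^ (-r)| ∂μ, fun e he ↦ ?_⟩
  have hmajorant := (hnear.const_mul 8).add ((hfar.comp_sub_left e).const_mul (5 ^ r))
  have hint : Integrable (fun w ↦ |log ‖e - w‖| * ‖w‖ ^ (-r)) μ :=
    hmajorant.mono' (by fun_prop) (.of_forall fun w ↦ by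
      rw [norm_of_nonneg (by positivity)]
      exact abs_log_norm_sub_mul_norm_rpow_neg_le hr0 he w)
  refine ⟨hint, (integral_mono hint hmajorant
    (abs_log_norm_sub_mul_norm_rpow_neg_le hr0 he)).trans_eq ?_⟩
  simp only [Pi.add_apply]
  rw [integral_add (hnear.const_mul 8) ((hfar.comp_sub_left e).const_mul (5 ^ r)),
    integral_const_mul, integral_const_mul,
    integral_sub_left_eq_self (fun w ↦ |log ‖w‖ * (1 + ‖w‖) ^ (-r)|) μ e]

lemma exists_integral_abs_log_norm_sub_div_norm_mul_norm_rpow_neg_le (hr : finrank ℝ E < r)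
    (hr' : r < finrank ℝ E + 1) :
    ∃ C, ∀ x : E, x ≠ 0 → Integrable (fun y ↦ |log (‖x - y‖ / ‖x‖)| * ‖y‖ ^ (-r)) μ ∧
      ∫ y, |log (‖x - y‖ / ‖x‖)| * ‖y‖ ^ (-r) ∂μ ≤ C * ‖x‖ ^ (finrank ℝ E - r) := by
  obtain ⟨C, hC⟩ := exists_integral_abs_log_norm_sub_mul_norm_rpow_neg_le (μ := μ) hr hr'
  refine ⟨C, fun x hx ↦ ?_⟩
  have hx0 : 0 < ‖x‖ := norm_pos_iff.2 hx
  obtain ⟨hint, hle⟩ := hC (‖x‖⁻¹ • x) (norm_smul_inv_norm hx)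
  have hscale : (fun y ↦ |log (‖x - y‖ / ‖x‖)| * ‖y‖ ^ (-r)) = fun y ↦ ‖x‖ ^ (-r) *
      (|log ‖‖x‖⁻¹ • x - ‖x‖⁻¹ • y‖| * ‖‖x‖⁻¹ • y‖ ^ (-r)) := by
    ext y
    rw [← smul_sub, norm_smul, norm_smul, norm_inv, norm_norm, ← div_eq_inv_mul, ← div_eq_inv_mul,
      div_rpow (norm_nonneg y) hx0.le]
    field
  rw [hscale, integral_const_mul, Measure.integral_comp_inv_smul_of_nonneg μ
    (fun w ↦ |log ‖‖x‖⁻¹ • x - w‖| * ‖w‖ ^ (-r)) hx0.le]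
  refine ⟨(hint.comp_smul (inv_ne_zero hx0.ne')).const_mul _, ?_⟩
  calc _ ≤ ‖x‖ ^ (-r) * (‖x‖ ^ finrank ℝ E * C) := by rw [smul_eq_mul]; gcongr
    _ = C * ‖x‖ ^ (finrank ℝ E - r) := by
      rw [sub_eq_neg_add, rpow_add hx0, rpow_natCast]
      ring

lemma integral_log_norm_sub_smul_eq_integral_log_div {x : E} (hx : x ≠ 0) (hf : Integrable f μ)
    (hlog : Integrable (fun y ↦ log ‖x - y‖ • f y) μ) (hzero : ∫ y, f y ∂μ = 0) :
    ∫ y, log ‖x - y‖ • f y ∂μ = ∫ y, log (‖x - y‖ / ‖x‖) • f y ∂μ := by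
  calc ∫ y, log ‖x - y‖ • f y ∂μ
      = (∫ y, log ‖x - y‖ • f y ∂μ) - ∫ y, log ‖x‖ • f y ∂μ := by
        rw [integral_smul, hzero, smul_zero, sub_zero]
    _ = ∫ y, (log ‖x - y‖ • f y - log ‖x‖ • f y) ∂μ := (integral_sub hlog (hf.smul _)).symm
    _ = ∫ y, log (‖x - y‖ / ‖x‖) • f y ∂μ := by
      refine integral_congr_ae ?_
      filter_upwards [Measure.ae_ne μ x] with y hy
      rw [log_div (norm_ne_zero_iff.2 (sub_ne_zero.2 hy.symm)) (norm_ne_zero_iff.2 hx), sub_smul]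

theorem isLittleO_integral_log_norm_sub_smul (hr : finrank ℝ E < r) (hr' : r < finrank ℝ E + 1)
    (hf : Integrable f μ) (hlog : ∀ x, Integrable (fun y ↦ log ‖x - y‖ • f y) μ)
    (hzero : ∫ y, f y ∂μ = 0) (hdecay : f =o[cocompact E] fun y ↦ ‖y‖ ^ (-r)) :
    (fun x ↦ ∫ y, log ‖x - y‖ • f y ∂μ) =o[cocompact E] fun x ↦ ‖x‖ ^ (finrank ℝ E - r) := by
  obtain ⟨C, hC⟩ := exists_integral_abs_log_norm_sub_div_norm_mul_norm_rpow_neg_le (μ := μ) hr hr'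
  refine isLittleO_iff.2 fun c hc ↦ ?_
  obtain ⟨δ, hδ, hδC⟩ : ∃ δ > 0, δ * C ≤ c / 2 := by
    refine ⟨c / 2 / (|C| + 1), by positivity, ?_⟩
    rw [div_mul_eq_mul_div, div_le_iff₀ (by positivity)]
    gcongr
    linarith [le_abs_self C]
  obtain ⟨M, hM0, hM⟩ := exists_norm_le_mul_norm_rpow_of_isLittleO hdecay hδ
  have hnear : (fun x ↦ 2 * M * (∫ y, ‖f y‖ ∂μ) * ‖x‖⁻¹) =o[cocompact E]
      fun x ↦ ‖x‖ ^ (finrank ℝ E - r) := by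
    simpa only [rpow_neg_one] using (isLittleO_norm_rpow_cocompact_of_lt (E := E) (a := -1)
      (b := finrank ℝ E - r) (by linarith)).const_mul_left (2 * M * ∫ y, ‖f y‖ ∂μ)
  filter_upwards [isLittleO_iff.1 hnear (half_pos hc),
    tendsto_norm_cocompact_atTop.eventually_ge_atTop (2 * M),
    tendsto_norm_cocompact_atTop.eventually_gt_atTop 0] with x hnearx hMx hx
  have hx : x ≠ 0 := norm_pos_iff.1 hx
  obtain ⟨hint, hle⟩ := hC x hx
  rw [norm_of_nonneg (r := ‖x‖ ^ (finrank ℝ E - r)) (by positivity)] at hnearx ⊢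
  rw [integral_log_norm_sub_smul_eq_integral_log_div hx hf (hlog x) hzero]
  calc ‖∫ y, log (‖x - y‖ / ‖x‖) • f y ∂μ‖
      ≤ 2 * M * (∫ y, ‖f y‖ ∂μ) * ‖x‖⁻¹ + δ * ∫ y, |log (‖x - y‖ / ‖x‖)| * ‖y‖ ^ (-r) ∂μ :=
        norm_integral_log_norm_sub_div_norm_smul_le hx hM0 hδ.le hMx hf hM hint
    _ ≤ c / 2 * ‖x‖ ^ (finrank ℝ E - r) + δ * (C * ‖x‖ ^ (finrank ℝ E - r)) := by
        exact add_le_add ((le_norm_self _).trans hnearx) (by gcongr)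
    _ ≤ c / 2 * ‖x‖ ^ (finrank ℝ E - r) + c / 2 * ‖x‖ ^ (finrank ℝ E - r) := by
        rw [← mul_assoc]
        gcongr
    _ = c * ‖x‖ ^ (finrank ℝ E - r) := by ring

end Decay

section LogPotential

lemma logPotential_eq_convolution (f : EuclideanSpace ℝ (Fin 2) → ℝ) :
    logPotential f = (2 * π)⁻¹ • ((fun y ↦ log ‖y‖) ⋆[lsmul ℝ ℝ] f) := by
  ext x
  rw [Pi.smul_apply, convolution_def, ← integral_sub_left_eq_self _ volume x]
  simp only [logPotential, lsmul_apply, sub_sub_cancel, smul_eq_mul]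

lemma pd2_const_smul (c : ℝ) (i : Fin 2) (g : EuclideanSpace ℝ (Fin 2) → ℝ) :
    pd2 i (c • g) = c • pd2 i g := by
  ext x
  simp only [pd2, fderiv_const_smul_field, Pi.smul_apply, smul_apply]

variable {f : EuclideanSpace ℝ (Fin 2) → ℝ} {r : ℝ}

lemma SmoothDecay.integrable_log_norm_sub_mul (hr : 2 < r) (hf : SmoothDecay r f)
    (x : EuclideanSpace ℝ (Fin 2)) : Integrable fun y ↦ log ‖x - y‖ * f y := by
  have hlog := integrable_log_norm_mul_one_add_norm_rpow_neg (E := EuclideanSpace ℝ (Fin 2))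
    (μ := volume) (r := r) (by simpa using hr)
  simpa using (hf.integrable_smul_sub (by linarith) hlog x).comp_sub_left x

lemma SmoothDecay.contDiff_logPotential (hr : 2 < r) (hf : SmoothDecay r f) :
    ContDiff ℝ ∞ (logPotential f) := by
  rw [logPotential_eq_convolution]
  have hlog := integrable_log_norm_mul_one_add_norm_rpow_neg (E := EuclideanSpace ℝ (Fin 2))
    (μ := volume) (r := r) (by simpa using hr)
  exact (hf.contDiff_convolution (by linarith) hlog).const_smul (2 * π)⁻¹

lemma SmoothDecay.laplacian_logPotential (hr : 2 < r) (hf : SmoothDecay r f)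
    (x : EuclideanSpace ℝ (Fin 2)) :
    pd2 0 (pd2 0 (logPotential f)) x + pd2 1 (pd2 1 (logPotential f)) x = f x := by
  have hsum := hf.sum_fderiv_fderiv_log_convolution (EuclideanSpace.basisFun (Fin 2) ℝ)
    finrank_euclideanSpace_fin hr x
  simp only [EuclideanSpace.basisFun_apply, Fin.sum_univ_two, smul_eq_mul] at hsum
  rw [logPotential_eq_convolution]
  simp only [pd2_const_smul, Pi.smul_apply, smul_eq_mul, ← mul_add]
  exact (congrArg _ hsum).trans (inv_mul_cancel_left₀ two_pi_pos.ne' _)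

lemma SmoothDecay.isLittleO_logPotential (hr : 2 < r) (hr' : r < 3) (hf : SmoothDecay r f)
    (hzero : ∫ x, f x = 0)
    (hdecay : f =o[cocompact (EuclideanSpace ℝ (Fin 2))] fun x ↦ ‖x‖ ^ (-r)) :
    logPotential f =o[cocompact (EuclideanSpace ℝ (Fin 2))] fun x ↦ ‖x‖ ^ (2 - r) := by
  have hd : (finrank ℝ (EuclideanSpace ℝ (Fin 2)) : ℝ) = 2 := by simp
  have hr2 : (finrank ℝ (EuclideanSpace ℝ (Fin 2)) : ℝ) < r := hd.trans_lt hr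
  have hsmall := isLittleO_integral_log_norm_sub_smul hr2 (by linarith) (hf.integrable hr2)
    (hf.integrable_log_norm_sub_mul hr) hzero hdecay
  rw [hd] at hsmall
  exact hsmall.const_mul_left (2 * π)⁻¹

theorem stmt13_general (hr : 2 < r) (hr' : r < 3) (hfsmooth : ContDiff ℝ ∞ f)
    (hfbound : ∀ m : ℕ, iteratedFDeriv ℝ m f
      =O[cocompact (EuclideanSpace ℝ (Fin 2))] fun x ↦ ‖x‖ ^ (-r))
    (hfdecay : f =o[cocompact (EuclideanSpace ℝ (Fin 2))] fun x ↦ ‖x‖ ^ (-r))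
    (hfzero : ∫ x, f x = 0) :
    (∀ x, Integrable fun y ↦ log ‖x - y‖ * f y) ∧
    ContDiff ℝ ∞ (logPotential f) ∧
    (∀ x, pd2 0 (pd2 0 (logPotential f)) x + pd2 1 (pd2 1 (logPotential f)) x = f x) ∧
    logPotential f =o[cocompact (EuclideanSpace ℝ (Fin 2))] fun x ↦ ‖x‖ ^ (2 - r) := by
  have hf : SmoothDecay r f := .of_isBigO hfsmooth hfbound
  exact ⟨hf.integrable_log_norm_sub_mul hr, hf.contDiff_logPotential hr,
    hf.laplacian_logPotential hr, hf.isLittleO_logPotential hr hr' hfzero hfdecay⟩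

end LogPotential

theorem stmt13
    (f : EuclideanSpace ℝ (Fin 2) → ℝ)
    (hfsmooth : ContDiff ℝ (⊤ : ℕ∞) f)
    (hfdecay : ∀ m : ℕ,
      (fun x => ‖iteratedFDeriv ℝ m f x‖)
        =o[cocompact (EuclideanSpace ℝ (Fin 2))] fun x => ‖x‖ ^ ((-5/2 : ℝ) - m))
    (hfzero : ∫ x, f x = 0) :
    (∀ x, Integrable fun y => Real.log ‖x - y‖ * f y) ∧
    ContDiff ℝ (⊤ : ℕ∞) (logPotential f) ∧
    (∀ x, pd2 0 (pd2 0 (logPotential f)) x + pd2 1 (pd2 1 (logPotential f)) x = f x) ∧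
    ((fun x => logPotential f x)
      =o[cocompact (EuclideanSpace ℝ (Fin 2))] fun x => ‖x‖ ^ (-1/2 : ℝ)) := by
  have hbound (m : ℕ) := (hfdecay m).isBigO.of_norm_left.trans
    (isBigO_norm_rpow_cocompact_of_le (b := -(5 / 2)) (by linarith [m.cast_nonneg (α := ℝ)]))
  convert stmt13_general (by norm_num) (by norm_num) hfsmooth hbound
    (by simpa [neg_div] using hfdecay 0) hfzero using 6
  norm_num

end
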